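/- Let P be a probability measure on ℝ^r with finite second moments which is absolutely continuous with respect to Lebesgue measure; let m ∈ ℝ^r be its mean vector and K ∈ ℝ^{r×r} its covariance matrix, and assume K is positive definite. Let a ∈ ℝ^r and let C ∈ ℝ^{r×r} be symmetric positive definite. Then D(P ‖ N(a, C)) ≥ (1/2) ( (m − a)ᵀ C⁻¹ (m − a) + tr(C⁻¹ K) − log det(C⁻¹ K) − r ), and equality holds if and only if P = N(m, K), i.e. if and only if P is Gaussian. -/

import Mathlib

open MeasureTheory ProbabilityTheory Matrix
open scoped ENNReal ProbabilityTheory Classical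

/-- The Gaussian (multivariate normal) measure `N(a, C)` on `ℝ^r`, with mean vector `a` and
positive definite covariance matrix `C`, given by its density
`(2π)^{-r/2} (det C)^{-1/2} exp(-½ (x-a)ᵀ C⁻¹ (x-a))` with respect to Lebesgue measure. -/
noncomputable def gaussianPi {r : ℕ} (a : Fin r → ℝ) (C : Matrix (Fin r) (Fin r) ℝ) :
    Measure (Fin r → ℝ) :=
  volume.withDensity fun x =>
    ENNReal.ofReal (Real.sqrt (((2 * Real.pi) ^ r * C.det)⁻¹) *
      Real.exp (-(1 / 2) * ((x - a) ⬝ᵥ (C⁻¹ *ᵥ (x - a)))))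

/-- The pair `(A, B)` is reachable: the controllability matrix
`[B, AB, …, A^{n-1}B]` has rank `n`. -/
def IsReachablePair {n m : ℕ} (A : Matrix (Fin n) (Fin n) ℝ)
    (B : Matrix (Fin n) (Fin m) ℝ) : Prop :=
  (Matrix.of fun (i : Fin n) (p : Fin n × Fin m) => (A ^ (p.1 : ℕ) * B) i p.2).rank = n

/-- Kullback-Leibler divergence `D(P ‖ Q)`, valued in `[0,∞]`.  For probability measures with
`P ≪ Q` it equals `∫ log (dP/dQ) dP`, computed here in the equivalent nonnegative form
`∫⁻ (φ log φ - φ + 1) dQ` where `φ = dP/dQ`; it is `∞` when `¬ P ≪ Q`. -/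
noncomputable def klDiv {α : Type*} [MeasurableSpace α] (P Q : Measure α) : ℝ≥0∞ :=
  if P ≪ Q then
    ∫⁻ x, ENNReal.ofReal ((P.rnDeriv Q x).toReal * Real.log (P.rnDeriv Q x).toReal
      - (P.rnDeriv Q x).toReal + 1) ∂Q
  else ∞

section Helpers

open scoped MatrixOrder in
lemma exists_factor {r : ℕ} {C : Matrix (Fin r) (Fin r) ℝ} (hC : C.PosDef) :
    ∃ B : Matrix (Fin r) (Fin r) ℝ, C⁻¹ = Bᵀ * B ∧ B.det ≠ 0 ∧ B.det ^ 2 = C.det⁻¹ := by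
  obtain ⟨B, hB⟩ := CStarAlgebra.nonneg_iff_eq_star_mul_self.mp hC.inv.posSemidef.nonneg
  have hB' : C⁻¹ = Bᵀ * B := by
    rw [hB, star_eq_conjTranspose, conjTranspose_eq_transpose_of_trivial]
  have hd : B.det ^ 2 = C.det⁻¹ := by
    have := congrArg Matrix.det hB'
    rw [det_mul, det_transpose, det_nonsing_inv, Ring.inverse_eq_inv'] at this
    rw [this, sq]
  refine ⟨B, hB', ?_, hd⟩
  intro h
  rw [h] at hd
  have := hC.det_pos
  have := inv_pos.mpr this
  norm_num at hd
  linarith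

lemma quad_factor {r : ℕ} {A B : Matrix (Fin r) (Fin r) ℝ} (h : A = Bᵀ * B) (v : Fin r → ℝ) :
    v ⬝ᵥ (A *ᵥ v) = ∑ i, (B *ᵥ v) i ^ 2 := by
  rw [h, ← mulVec_mulVec, dotProduct_mulVec, vecMul_transpose]
  simp [dotProduct, sq]

lemma logdet_bound {r : ℕ} {K C : Matrix (Fin r) (Fin r) ℝ} (hK : K.PosDef) (hC : C.PosDef) :
    0 ≤ (C⁻¹ * K).trace - Real.log (C⁻¹ * K).det - r := by
  obtain ⟨B, hB, hd, -⟩ := exists_factor hC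
  have hM : (B * K * Bᴴ).PosDef := by
    apply hK.mul_mul_conjTranspose_same
    rw [vecMul_injective_iff_isUnit, isUnit_iff_isUnit_det]
    exact hd.isUnit
  rw [conjTranspose_eq_transpose_of_trivial] at hM
  have ht : (C⁻¹ * K).trace = (B * K * Bᵀ).trace := by
    rw [hB, Matrix.trace_mul_comm (B * K), Matrix.mul_assoc]
  have hdet : (C⁻¹ * K).det = (B * K * Bᵀ).det := by
    rw [hB]; simp only [det_mul]; ring
  rw [ht, hdet, hM.1.trace_eq_sum_eigenvalues, hM.1.det_eq_prod_eigenvalues]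
  simp only [RCLike.ofReal_real_eq_id, id]
  rw [Real.log_prod (fun i _ => (hM.eigenvalues_pos i).ne')]
  have : ∑ i, Real.log (hM.1.eigenvalues i) ≤ ∑ i, (hM.1.eigenvalues i - 1) :=
    Finset.sum_le_sum fun i _ => Real.log_le_sub_one_of_pos (hM.eigenvalues_pos i)
  simp at this
  linarith

/-- real density -/
noncomputable def gpdf {r : ℕ} (a : Fin r → ℝ) (C : Matrix (Fin r) (Fin r) ℝ)
    (x : Fin r → ℝ) : ℝ :=
  Real.sqrt (((2 * Real.pi) ^ r * C.det)⁻¹) *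
      Real.exp (-(1 / 2) * ((x - a) ⬝ᵥ (C⁻¹ *ᵥ (x - a))))

lemma gaussianPi_eq {r : ℕ} (a : Fin r → ℝ) (C : Matrix (Fin r) (Fin r) ℝ) :
    gaussianPi a C = volume.withDensity fun x => ENNReal.ofReal (gpdf a C x) := rfl

lemma gpdf_pos {r : ℕ} (a : Fin r → ℝ) {C : Matrix (Fin r) (Fin r) ℝ} (hC : C.PosDef)
    (x : Fin r → ℝ) : 0 < gpdf a C x := by
  have := hC.det_pos
  unfold gpdf
  positivity

lemma continuous_gpdf {r : ℕ} (a : Fin r → ℝ) (C : Matrix (Fin r) (Fin r) ℝ) :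
    Continuous (gpdf a C) := by
  unfold gpdf
  simp only [dotProduct, mulVec]
  fun_prop

lemma measurable_gpdf {r : ℕ} (a : Fin r → ℝ) (C : Matrix (Fin r) (Fin r) ℝ) :
    Measurable fun x => ENNReal.ofReal (gpdf a C x) :=
  (continuous_gpdf a C).measurable.ennreal_ofReal

lemma log_gpdf {r : ℕ} (a : Fin r → ℝ) {C : Matrix (Fin r) (Fin r) ℝ} (hC : C.PosDef)
    (x : Fin r → ℝ) : Real.log (gpdf a C x) =
      -(1 / 2) * (Real.log ((2 * Real.pi) ^ r) + Real.log C.det)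
        - (1 / 2) * ((x - a) ⬝ᵥ (C⁻¹ *ᵥ (x - a))) := by
  have := hC.det_pos
  have h2 : (0:ℝ) < (2 * Real.pi) ^ r := by positivity
  unfold gpdf
  rw [Real.log_mul (by positivity) (by positivity), Real.log_exp, Real.log_sqrt (by positivity),
    Real.log_inv, Real.log_mul h2.ne' this.ne']
  ring

lemma integral_std {r : ℕ} :
    ∫ x : Fin r → ℝ, Real.exp (-(1 / 2) * ∑ i, x i ^ 2) = Real.sqrt (2 * Real.pi) ^ r := by
  have : ∀ x : Fin r → ℝ, Real.exp (-(1 / 2) * ∑ i, x i ^ 2)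
      = ∏ i, Real.exp (-(1 / 2) * x i ^ 2) := by
    intro x; rw [← Real.exp_sum, Finset.mul_sum]
  simp_rw [this]
  rw [integral_fintype_prod_volume_eq_pow (fun y : ℝ => Real.exp (-(1 / 2) * y ^ 2)),
    integral_gaussian]
  simp [mul_comm]

lemma lintegral_std {r : ℕ} :
    ∫⁻ x : Fin r → ℝ, ENNReal.ofReal (Real.exp (-(1 / 2) * ∑ i, x i ^ 2))
      = ENNReal.ofReal (Real.sqrt (2 * Real.pi) ^ r) := by
  rw [← integral_std, ofReal_integral_eq_lintegral_ofReal]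
  · by_contra h
    have := integral_undef h
    rw [integral_std] at this
    have : 0 < Real.sqrt (2 * Real.pi) ^ r := by positivity
    linarith
  · exact Filter.Eventually.of_forall fun x => (Real.exp_pos _).le

lemma isProb_gaussianPi {r : ℕ} (a : Fin r → ℝ) {C : Matrix (Fin r) (Fin r) ℝ} (hC : C.PosDef) :
    IsProbabilityMeasure (gaussianPi a C) := by
  obtain ⟨B, hB, hd, hd2⟩ := exists_factor hC
  constructor
  rw [gaussianPi, withDensity_apply _ MeasurableSet.univ, Measure.restrict_univ]
  rw [lintegral_sub_right_eq_self (fun x : Fin r → ℝ =>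
    ENNReal.ofReal (Real.sqrt (((2 * Real.pi) ^ r * C.det)⁻¹) *
      Real.exp (-(1 / 2) * (x ⬝ᵥ (C⁻¹ *ᵥ x)))))]
  simp_rw [quad_factor hB, ENNReal.ofReal_mul (Real.sqrt_nonneg _)]
  rw [lintegral_const_mul _ (by simp only [dotProduct, mulVec]; fun_prop)]
  have hmap := Real.map_matrix_volume_pi_eq_smul_volume_pi hd
  have h1 : ∫⁻ x : Fin r → ℝ, ENNReal.ofReal (Real.exp (-(1 / 2) * ∑ i, (B *ᵥ x) i ^ 2))
      = ∫⁻ y, ENNReal.ofReal (Real.exp (-(1 / 2) * ∑ i, y i ^ 2))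
        ∂(Measure.map (toLin' B) volume) := by
    rw [lintegral_map (by fun_prop) (toLin' B).continuous_of_finiteDimensional.measurable]
    simp [toLin'_apply]
  rw [h1, hmap, lintegral_smul_measure, lintegral_std, smul_eq_mul,
    ← ENNReal.ofReal_mul (abs_nonneg _), ← ENNReal.ofReal_mul (Real.sqrt_nonneg _),
    ENNReal.ofReal_eq_one]
  have hb : Real.sqrt C.det⁻¹ = |B.det| := by rw [← hd2, Real.sqrt_sq_eq_abs]
  have hp : Real.sqrt (2 * Real.pi) ^ r = Real.sqrt ((2 * Real.pi) ^ r) := by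
    rw [Real.sqrt_eq_rpow, Real.sqrt_eq_rpow, ← Real.rpow_natCast, ← Real.rpow_natCast,
      ← Real.rpow_mul (by positivity), ← Real.rpow_mul (by positivity), mul_comm (1 / 2 : ℝ)]
  rw [mul_inv, Real.sqrt_mul (by positivity), hb, hp, Real.sqrt_inv, abs_inv]
  have : 0 < |B.det| := abs_pos.mpr hd
  have : 0 < Real.sqrt ((2 * Real.pi) ^ r) := by positivity
  field_simp

lemma volume_ac_gaussianPi {r : ℕ} (a : Fin r → ℝ) {C : Matrix (Fin r) (Fin r) ℝ}
    (hC : C.PosDef) : (volume : Measure (Fin r → ℝ)) ≪ gaussianPi a C := by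
  rw [gaussianPi_eq]
  apply withDensity_absolutelyContinuous' (measurable_gpdf a C).aemeasurable
  exact Filter.Eventually.of_forall fun x => by simpa using gpdf_pos a hC x

lemma llr_gaussianPi {r : ℕ} (P : Measure (Fin r → ℝ)) [IsProbabilityMeasure P]
    (hac : P ≪ volume) (a : Fin r → ℝ) {C : Matrix (Fin r) (Fin r) ℝ} (hC : C.PosDef) :
    llr P (gaussianPi a C) =ᵐ[P] fun x => llr P volume x - Real.log (gpdf a C x) := by
  have := isProb_gaussianPi a hC
  have hPQ : P ≪ gaussianPi a C := hac.trans (volume_ac_gaussianPi a hC)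
  have h1 := hac.ae_le (Measure.rnDeriv_mul_rnDeriv (κ := volume) hPQ)
  have h2 := hac.ae_le (Measure.rnDeriv_withDensity (volume : Measure (Fin r → ℝ))
    (measurable_gpdf a C))
  have hLD : P.HaveLebesgueDecomposition (gaussianPi a C) :=
    Measure.haveLebesgueDecomposition_of_sigmaFinite P (gaussianPi a C)
  have h3 := Measure.rnDeriv_pos hPQ
  have h4 := hPQ.ae_le (Measure.rnDeriv_lt_top P (gaussianPi a C))
  filter_upwards [h1, h2, h3, h4] with x h1 h2 h3 h4
  rw [← gaussianPi_eq] at h2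
  rw [Pi.mul_apply, h2] at h1
  simp only [llr]
  rw [← h1, ENNReal.toReal_mul, ENNReal.toReal_ofReal (gpdf_pos a hC x).le,
    Real.log_mul (ENNReal.toReal_pos h3.ne' h4.ne).ne' (gpdf_pos a hC x).ne']
  ring

lemma klDiv_eq_info {α : Type*} [MeasurableSpace α] (P Q : Measure α) [IsFiniteMeasure P]
    [IsFiniteMeasure Q] : klDiv P Q = InformationTheory.klDiv P Q := by
  rw [klDiv, InformationTheory.klDiv_eq_lintegral_klFun]
  simp only [InformationTheory.klFun_apply]
  congr 1
  congr 1
  ext x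
  congr 1
  ring

lemma quad_moment {r : ℕ} (P : Measure (Fin r → ℝ)) [IsProbabilityMeasure P]
    (hmom : ∀ i j, Integrable (fun x => x i * x j) P)
    (mv : Fin r → ℝ) (hm : ∀ i, mv i = ∫ x, x i ∂P)
    (K : Matrix (Fin r) (Fin r) ℝ)
    (hK : ∀ i j, K i j = ∫ x, (x i - mv i) * (x j - mv j) ∂P)
    (a : Fin r → ℝ) (A : Matrix (Fin r) (Fin r) ℝ) :
    Integrable (fun x => (x - a) ⬝ᵥ (A *ᵥ (x - a))) P ∧
    ∫ x, (x - a) ⬝ᵥ (A *ᵥ (x - a)) ∂P = (mv - a) ⬝ᵥ (A *ᵥ (mv - a)) + (A * K).trace := by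
  have hi : ∀ i, Integrable (fun x : Fin r → ℝ => x i) P := by
    intro i
    have : MemLp (fun x : Fin r → ℝ => x i) 2 P := by
      rw [memLp_two_iff_integrable_sq (measurable_pi_apply i).aestronglyMeasurable]
      simpa [sq] using hmom i i
    exact this.integrable (by norm_num)
  have hz : ∀ i, ∫ x, (x i - mv i) ∂P = 0 := by
    intro i
    rw [integral_sub (hi i) (integrable_const _), ← hm]; simp
  have hiz : ∀ i, Integrable (fun x : Fin r → ℝ => x i - mv i) P :=
    fun i => (hi i).sub (integrable_const _)
  have hzz : ∀ i j, Integrable (fun x : Fin r → ℝ => (x i - mv i) * (x j - mv j)) P := by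
    intro i j
    have : (fun x : Fin r → ℝ => (x i - mv i) * (x j - mv j))
        = fun x => x i * x j - mv j * x i - mv i * x j + mv i * mv j := by ext x; ring
    rw [this]
    exact (((hmom i j).sub ((hi i).const_mul _)).sub ((hi j).const_mul _)).add
      (integrable_const _)
  have hsym : ∀ i j, K i j = K j i := by
    intro i j; rw [hK, hK]; simp_rw [mul_comm]
  have he : ∀ i j, (fun x : Fin r → ℝ => A i j * ((x i - a i) * (x j - a j))) =
      fun x => A i j * ((x i - mv i) * (x j - mv j) + (mv j - a j) * (x i - mv i)
        + (mv i - a i) * (x j - mv j) + (mv i - a i) * (mv j - a j)) := by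
    intro i j; ext x; ring
  have hI : ∀ i j, Integrable (fun x : Fin r → ℝ => A i j * ((x i - a i) * (x j - a j))) P := by
    intro i j
    rw [he]
    exact ((((hzz i j).add ((hiz i).const_mul _)).add ((hiz j).const_mul _)).add
      (integrable_const _)).const_mul _
  have hv : ∀ i j, ∫ x, A i j * ((x i - a i) * (x j - a j)) ∂P
      = A i j * K i j + A i j * ((mv i - a i) * (mv j - a j)) := by
    intro i j
    have j1 : Integrable (fun x : Fin r → ℝ => (x i - mv i) * (x j - mv j)
        + (mv j - a j) * (x i - mv i)) P := (hzz i j).add ((hiz i).const_mul _)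
    have j2 : Integrable (fun x : Fin r → ℝ => (x i - mv i) * (x j - mv j)
        + (mv j - a j) * (x i - mv i) + (mv i - a i) * (x j - mv j)) P :=
      j1.add ((hiz j).const_mul _)
    rw [he, integral_const_mul, integral_add j2 (integrable_const _),
      integral_add j1 ((hiz j).const_mul _),
      integral_add (hzz i j) ((hiz i).const_mul _), integral_const_mul, integral_const_mul,
      hz, hz, ← hK]
    simp
    ring
  have hq : ∀ x : Fin r → ℝ, (x - a) ⬝ᵥ (A *ᵥ (x - a))
      = ∑ i, ∑ j, A i j * ((x i - a i) * (x j - a j)) := by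
    intro x
    simp only [dotProduct, mulVec, Finset.mul_sum, Pi.sub_apply]
    refine Finset.sum_congr rfl fun i _ => Finset.sum_congr rfl fun j _ => by ring
  simp_rw [hq]
  refine ⟨integrable_finsetSum _ fun i _ => integrable_finsetSum _ fun j _ => hI i j, ?_⟩
  rw [integral_finsetSum _ fun i _ => integrable_finsetSum _ fun j _ => hI i j]
  simp_rw [integral_finsetSum _ fun j _ => hI _ j, hv, Finset.sum_add_distrib]
  rw [add_comm]
  congr 1
  simp only [Matrix.trace, diag_apply, mul_apply]
  refine Finset.sum_congr rfl fun i _ => Finset.sum_congr rfl fun j _ => by rw [hsym]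

end Helpers

/-- Gaussian lower bound on relative entropy: for a probability measure `P` on `ℝ^r` with
density, finite second moments, mean `mv` and positive definite covariance `K`,
`D(P ‖ N(a, C)) ≥ ½ ((mv−a)ᵀC⁻¹(mv−a) + tr(C⁻¹K) − log det(C⁻¹K) − r)`,
with equality iff `P = N(mv, K)`, i.e. iff `P` is Gaussian. -/
theorem klDiv_gaussian_lower_bound
    {r : ℕ} (P : Measure (Fin r → ℝ)) [IsProbabilityMeasure P]
    (hac : P ≪ volume)
    (hmom : ∀ i j, Integrable (fun x => x i * x j) P)
    (mv : Fin r → ℝ) (hm : ∀ i, mv i = ∫ x, x i ∂P)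
    (K : Matrix (Fin r) (Fin r) ℝ)
    (hK : ∀ i j, K i j = ∫ x, (x i - mv i) * (x j - mv j) ∂P)
    (hKpd : K.PosDef)
    (a : Fin r → ℝ) (C : Matrix (Fin r) (Fin r) ℝ) (hC : C.PosDef) :
    ENNReal.ofReal ((1 / 2) * ((mv - a) ⬝ᵥ (C⁻¹ *ᵥ (mv - a)) + (C⁻¹ * K).trace
        - Real.log (C⁻¹ * K).det - r)) ≤ klDiv P (gaussianPi a C) ∧
    (klDiv P (gaussianPi a C)
        = ENNReal.ofReal ((1 / 2) * ((mv - a) ⬝ᵥ (C⁻¹ *ᵥ (mv - a)) + (C⁻¹ * K).trace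
            - Real.log (C⁻¹ * K).det - r))
      ↔ P = gaussianPi mv K) := by
  have hQp := isProb_gaussianPi a hC
  have hGp := isProb_gaussianPi mv hKpd
  have hPQ : P ≪ gaussianPi a C := hac.trans (volume_ac_gaussianPi a hC)
  have hPG : P ≪ gaussianPi mv K := hac.trans (volume_ac_gaussianPi mv hKpd)
  set R := (1 / 2) * ((mv - a) ⬝ᵥ (C⁻¹ *ᵥ (mv - a)) + (C⁻¹ * K).trace
        - Real.log (C⁻¹ * K).det - r) with hR
  have hR0 : 0 ≤ R := by
    have h1 := logdet_bound hKpd hC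
    have h2 : 0 ≤ (mv - a) ⬝ᵥ (C⁻¹ *ᵥ (mv - a)) := by
      simpa using hC.inv.posSemidef.dotProduct_mulVec_nonneg (mv - a)
    rw [hR]; linarith
  obtain ⟨i1, e1⟩ := quad_moment P hmom mv hm K hK a C⁻¹
  obtain ⟨i2, e2⟩ := quad_moment P hmom mv hm K hK mv K⁻¹
  have hllr : llr P (gaussianPi a C) =ᵐ[P] fun x => llr P (gaussianPi mv K) x +
      (Real.log (gpdf mv K x) - Real.log (gpdf a C x)) := by
    filter_upwards [llr_gaussianPi P hac a hC, llr_gaussianPi P hac mv hKpd] with x h1 h2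
    rw [h1, h2]; ring
  have hhint : Integrable (fun x => Real.log (gpdf mv K x) - Real.log (gpdf a C x)) P := by
    simp_rw [log_gpdf mv hKpd, log_gpdf a hC]
    exact ((integrable_const _).sub (i2.const_mul _)).sub
      ((integrable_const _).sub (i1.const_mul _))
  have hhval : ∫ x, (Real.log (gpdf mv K x) - Real.log (gpdf a C x)) ∂P = R := by
    simp_rw [log_gpdf mv hKpd, log_gpdf a hC]
    have jj : ∀ (c : ℝ) {f : (Fin r → ℝ) → ℝ}, Integrable f P →
        Integrable (fun x => c - (1 / 2) * f x) P :=
      fun c f hf => (integrable_const _).sub (hf.const_mul _)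
    rw [integral_sub (jj _ i2) (jj _ i1), integral_sub (integrable_const _)
      (i2.const_mul _), integral_sub (integrable_const _) (i1.const_mul _),
      integral_const_mul, integral_const_mul, integral_const_mul, integral_const_mul, e1, e2, hR]
    have hdet : Real.log (C⁻¹ * K).det = Real.log K.det - Real.log C.det := by
      rw [det_mul, det_nonsing_inv, Ring.inverse_eq_inv',
        Real.log_mul (inv_pos.mpr hC.det_pos).ne' hKpd.det_pos.ne', Real.log_inv]
      ring
    rw [hdet, nonsing_inv_mul _ hKpd.det_pos.ne'.isUnit]
    simp
    ring
  have key : InformationTheory.klDiv P (gaussianPi a C)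
      = InformationTheory.klDiv P (gaussianPi mv K) + ENNReal.ofReal R := by
    by_cases hint : Integrable (llr P (gaussianPi mv K)) P
    · have hint' : Integrable (llr P (gaussianPi a C)) P :=
        (hint.add hhint).congr hllr.symm
      have hn := InformationTheory.integral_llr_add_sub_measure_univ_nonneg hPG hint
      rw [InformationTheory.klDiv_of_ac_of_integrable hPQ hint',
        InformationTheory.klDiv_of_ac_of_integrable hPG hint, ← ENNReal.ofReal_add hn hR0,
        integral_congr_ae hllr, integral_add hint hhint, hhval]
      congr 1
      simp
    · have hint' : ¬ Integrable (llr P (gaussianPi a C)) P := by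
        intro h
        apply hint
        refine (h.sub hhint).congr ?_
        filter_upwards [hllr] with x hx
        simp [hx]
      rw [InformationTheory.klDiv_of_not_integrable hint,
        InformationTheory.klDiv_of_not_integrable hint', top_add]
  rw [klDiv_eq_info, key]
  refine ⟨le_add_self, ?_⟩
  rw [← InformationTheory.klDiv_eq_zero_iff]
  constructor
  · intro h
    refine (ENNReal.add_left_inj (ENNReal.ofReal_ne_top (r := R))).mp ?_
    rw [zero_add, h]
  · intro h
    rw [h, zero_add]
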